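/- Inframultiplicativity (norm −1 case): for every integer k ≥ 2 and all nonzero x₁, …, x_k ∈ ℤ[θ], θ^{−k}·|x₁|_θ⋯|x_k|_θ ≤ |x₁⋯x_k|_θ ≤ θ^{k}·|x₁|_θ⋯|x_k|_θ. -/

import Mathlib

/-!
The Galois conjugate controls the infranorm. If `x = ± θ^v ∑ c_i θ^i` with `(c_i)` admissible and
`c_0 ≠ 0`, then `|x'| = θ^{-v} |c_0 - c_1/θ + c_2/θ² - ⋯|`, and admissibility forces the
alternating sum to lie in the open interval `(1/θ, θ)` (`conjSum_bounds`, `conjSum_lower`). Hence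
`θ^{-1} |x|_θ < |x'| < θ |x|_θ` (`conj_bounds`). As conjugation is multiplicative and all
infranorms are powers of `θ`, the strict inequalities for the `k` factors and for the product give
the two bounds: an exponent less than `k + 1` is at most `k`.

That `v(x)` is a genuine maximum requires every element of `ℤ[θ]` to have a finite expansion
(`exists_mem_Ztheta`). After scaling, let `x ∈ [0, 1)` and iterate `r ↦ fract (θ r)`. On conjugates
this is `s ↦ -s/θ - d` with `d ∈ {0, …, a}`, which preserves `[-θ, 1]` and contracts distances by
`1/θ`; so after enough steps the remainder `r = p + qθ ∈ [0, 1)` has conjugate in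
`[-θ - 1/θ, 1 + 1/θ]`. Since `r - r' = q (θ + 1/θ)`, only `q ∈ {0, 1}` is possible, that is
`r = 0` or `r = 1/θ`, and the remainder following `1/θ` is `0`.
-/

noncomputable section

/-- The real quadratic unit `θ = (a + √(a²+4))/2`, the positive root of `θ² = aθ + 1`
(the norm `N(θ) = −1` case). -/
def theta (a : ℕ) : ℝ := ((a : ℝ) + Real.sqrt ((a : ℝ) ^ 2 + 4)) / 2

/-- The Galois conjugate `θ' = −θ⁻¹`. -/
def thetaConj (a : ℕ) : ℝ := -(theta a)⁻¹

/-- Membership in the ring `ℤ[θ]`. -/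
def inOK (a : ℕ) (x : ℝ) : Prop := ∃ p q : ℤ, x = (p : ℝ) + (q : ℝ) * theta a

/-- A finite integer sequence, supported in `[m, M]`, is admissible (norm `−1` case) if all its
entries lie in `{0, …, a}` and an entry equal to `a` is always followed (below) by a `0`. -/
def AdmissibleOn (a : ℕ) (m M : ℤ) (b : ℤ → ℤ) : Prop :=
  (∀ i, b i ≠ 0 → m ≤ i ∧ i ≤ M) ∧
  (∀ i, 0 ≤ b i ∧ b i ≤ (a : ℤ)) ∧
  (∀ i, b i = (a : ℤ) → b (i - 1) = 0)

/-- The set `ℤ_θ` of θ-integers: signed sums `± Σ_{i=0}^{M} b_i θ^i` with `(b_i)` admissible. -/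
def Ztheta (a : ℕ) : Set ℝ :=
  { x | ∃ (ε : ℤ) (M : ℤ) (b : ℤ → ℤ), (ε = 1 ∨ ε = -1) ∧ 0 ≤ M ∧
      AdmissibleOn a 0 M b ∧
      x = (ε : ℝ) * ∑ i ∈ Finset.Icc (0 : ℤ) M, (b i : ℝ) * theta a ^ i }

/-- `v(x) = max { k : ℤ | x / θ^k ∈ ℤ_θ }` (as a supremum in `ℤ`). -/
def vval (a : ℕ) (x : ℝ) : ℤ := sSup { k : ℤ | x / theta a ^ k ∈ Ztheta a }

/-- The θ-adic infranorm `|x|_θ = θ^{−v(x)}`, with `|0|_θ = 0`. -/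
def thNorm (a : ℕ) (x : ℝ) : ℝ := if x = 0 then 0 else theta a ^ (-vval a x)

/-- A sequence in `ℝ` is `|·|_θ`-Cauchy. -/
def IsThCauchy (a : ℕ) (x : ℕ → ℝ) : Prop :=
  ∀ ε : ℝ, 0 < ε → ∃ N : ℕ, ∀ i j : ℕ, N ≤ i → N ≤ j → thNorm a (x i - x j) < ε

/-! ### The unit `θ` -/

lemma theta_sq (a : ℕ) : theta a ^ 2 = a * theta a + 1 := by
  have h : Real.sqrt ((a : ℝ) ^ 2 + 4) ^ 2 = (a : ℝ) ^ 2 + 4 := Real.sq_sqrt (by positivity)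
  unfold theta
  linear_combination h / 4

lemma theta_pos (a : ℕ) : 0 < theta a := by
  unfold theta
  have : 0 < Real.sqrt ((a : ℝ) ^ 2 + 4) := Real.sqrt_pos.mpr (by positivity)
  positivity

lemma theta_inv (a : ℕ) : (theta a)⁻¹ = theta a - a := by
  have h := theta_pos a
  have h2 := theta_sq a
  field_simp
  linarith

lemma a_lt_theta (a : ℕ) : (a : ℝ) < theta a := by
  have h := inv_pos.mpr (theta_pos a)
  rw [theta_inv] at h
  linarith

lemma one_lt_theta {a : ℕ} (ha : 1 ≤ a) : 1 < theta a := by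
  have : (1 : ℝ) ≤ a := by exact_mod_cast ha
  linarith [a_lt_theta a]

lemma theta_lt {a : ℕ} (ha : 1 ≤ a) : theta a < a + 1 := by
  have h := inv_lt_one_of_one_lt₀ (one_lt_theta ha)
  rw [theta_inv] at h
  linarith

lemma theta_irrational {a : ℕ} (ha : 1 ≤ a) : Irrational (theta a) := by
  have hs : Irrational (Real.sqrt ((a ^ 2 + 4 : ℕ) : ℝ)) := by
    rw [irrational_sqrt_natCast_iff]
    rintro ⟨m, hm⟩
    -- `m² = a² + 4` forces `m = a + 1`, excluded by parity, or `m ≥ a + 2`, excluded by size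
    have h1 : a < m := by nlinarith
    rcases Nat.lt_or_ge m (a + 2) with h | h
    · have : m = a + 1 := by omega
      subst this
      ring_nf at hm
      omega
    · nlinarith
  have e : theta a = ((a : ℚ) / 2 : ℚ) + ((1 / 2 : ℚ) : ℝ) * Real.sqrt ((a ^ 2 + 4 : ℕ) : ℝ) := by
    unfold theta
    push_cast
    ring
  rw [e]
  exact (hs.ratCast_mul (by norm_num)).ratCast_add _

/-! ### Conjugation -/

/-- `y` is the Galois conjugate of `x ∈ ℤ[θ]`. Conjugation is encoded as a relation on `ℝ`, which is
functional by irrationality of `θ` (`IsConj'.unique`). -/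
def IsConj' (a : ℕ) (x y : ℝ) : Prop :=
  ∃ p q : ℤ, x = (p : ℝ) + q * theta a ∧ y = (p : ℝ) + q * thetaConj a

lemma thetaConj_eq (a : ℕ) : thetaConj a = a - theta a := by
  rw [thetaConj, theta_inv]; ring

lemma int_comb_eq_zero {a : ℕ} (ha : 1 ≤ a) {p q : ℤ} (h : (p : ℝ) + q * theta a = 0) :
    p = 0 ∧ q = 0 := by
  have hq : q = 0 := by
    by_contra hq
    have := ((theta_irrational ha).intCast_mul hq).intCast_add p
    exact this.ne_zero h
  subst hq
  simpa using h

namespace IsConj'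

variable {a : ℕ} {x y z w : ℝ}

lemma unique (ha : 1 ≤ a) (h : IsConj' a x y) (h' : IsConj' a x z) : y = z := by
  obtain ⟨p, q, h1, rfl⟩ := h
  obtain ⟨p', q', h2, rfl⟩ := h'
  obtain ⟨e1, e2⟩ := int_comb_eq_zero ha (p := p - p') (q := q - q')
    (by push_cast; linarith)
  rw [sub_eq_zero.mp e1, sub_eq_zero.mp e2]

lemma ne_zero (ha : 1 ≤ a) (h : IsConj' a x y) (hx : x ≠ 0) : y ≠ 0 := by
  obtain ⟨p, q, rfl, rfl⟩ := h
  intro h0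
  rw [thetaConj_eq] at h0
  obtain ⟨e1, e2⟩ := int_comb_eq_zero ha (p := p + q * a) (q := -q)
    (by push_cast; linarith)
  have hq : q = 0 := by omega
  subst hq
  simp at e1
  simp [e1] at hx

lemma intCast (n : ℤ) : IsConj' a n n := ⟨n, 0, by simp, by simp⟩

lemma add (h : IsConj' a x y) (h' : IsConj' a z w) : IsConj' a (x + z) (y + w) := by
  obtain ⟨p, q, rfl, rfl⟩ := h
  obtain ⟨p', q', rfl, rfl⟩ := h'
  exact ⟨p + p', q + q', by push_cast; ring, by push_cast; ring⟩

lemma mul (h : IsConj' a x y) (h' : IsConj' a z w) : IsConj' a (x * z) (y * w) := by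
  obtain ⟨p, q, rfl, rfl⟩ := h
  obtain ⟨p', q', rfl, rfl⟩ := h'
  have h2 := theta_sq a
  refine ⟨p * p' + q * q', p * q' + q * p' + q * q' * a, ?_, ?_⟩
  · push_cast
    linear_combination (q * q' : ℝ) * h2
  · rw [thetaConj_eq]
    push_cast
    linear_combination (q * q' : ℝ) * h2

lemma prod {ι : Type*} (s : Finset ι) (f g : ι → ℝ) (h : ∀ i ∈ s, IsConj' a (f i) (g i)) :
    IsConj' a (∏ i ∈ s, f i) (∏ i ∈ s, g i) := by
  classical
  induction s using Finset.induction_on with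
  | empty => simpa using intCast (a := a) 1
  | insert i s hi ih =>
    rw [Finset.prod_insert hi, Finset.prod_insert hi]
    exact (h i (by simp)).mul (ih fun j hj => h j (by simp [hj]))

lemma sum {ι : Type*} (s : Finset ι) (f g : ι → ℝ) (h : ∀ i ∈ s, IsConj' a (f i) (g i)) :
    IsConj' a (∑ i ∈ s, f i) (∑ i ∈ s, g i) := by
  classical
  induction s using Finset.induction_on with
  | empty => simpa using intCast (a := a) 0
  | insert i s hi ih =>
    rw [Finset.sum_insert hi, Finset.sum_insert hi]
    exact (h i (by simp)).add (ih fun j hj => h j (by simp [hj]))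

lemma theta_self (a : ℕ) : IsConj' a (theta a) (thetaConj a) := ⟨0, 1, by simp, by simp⟩

lemma theta_inv_self (a : ℕ) : IsConj' a (theta a)⁻¹ (thetaConj a)⁻¹ := by
  refine ⟨-a, 1, ?_, ?_⟩
  · rw [theta_inv]; push_cast; ring
  · rw [thetaConj_eq, ← neg_sub, ← theta_inv]
    rw [inv_neg, inv_inv, theta_inv]; push_cast; ring

lemma pow (h : IsConj' a x y) (n : ℕ) : IsConj' a (x ^ n) (y ^ n) := by
  simpa using prod (Finset.range n) (fun _ => x) (fun _ => y) fun _ _ => h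

lemma theta_zpow (a : ℕ) (k : ℤ) : IsConj' a (theta a ^ k) (thetaConj a ^ k) := by
  cases k with
  | ofNat n => simpa using (theta_self a).pow n
  | negSucc n =>
    simpa [zpow_negSucc, inv_pow] using (theta_inv_self a).pow (n + 1)

end IsConj'

lemma abs_thetaConj_zpow (a : ℕ) (k : ℤ) : |thetaConj a ^ k| = theta a ^ (-k) := by
  rw [abs_zpow, thetaConj, abs_neg, abs_inv, abs_of_pos (theta_pos a), inv_zpow, zpow_neg]

/-! ### Admissible sequences indexed by `ℕ` -/

/-- Admissibility of a sequence `c : ℕ → ℤ` of digits at the nonnegative powers of `θ`. -/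
def Adm (a : ℕ) (c : ℕ → ℤ) : Prop :=
  (∀ i, 0 ≤ c i ∧ c i ≤ a) ∧ ∀ i, c (i + 1) = a → c i = 0

lemma Adm.shift {a : ℕ} {c : ℕ → ℤ} (h : Adm a c) : Adm a (fun i => c (i + 1)) :=
  ⟨fun i => h.1 (i + 1), fun i => h.2 (i + 1)⟩

lemma sum_Icc_int (n : ℕ) (f : ℤ → ℝ) :
    ∑ i ∈ Finset.Icc (0 : ℤ) n, f i = ∑ i ∈ Finset.range (n + 1), f i := by
  refine Finset.sum_nbij' (fun i => i.toNat) (fun i => (i : ℤ)) ?_ ?_ ?_ ?_ ?_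
  · intro i hi; simp at hi ⊢; omega
  · intro i hi; simp at hi ⊢; omega
  · intro i hi; simp at hi ⊢; omega
  · intro i hi; simp
  · intro i hi; simp at hi; rw [Int.toNat_of_nonneg hi.1]

lemma mem_Ztheta_iff {a : ℕ} (ha : 1 ≤ a) (x : ℝ) :
    x ∈ Ztheta a ↔ ∃ (ε : ℤ) (n : ℕ) (c : ℕ → ℤ), (ε = 1 ∨ ε = -1) ∧ Adm a c ∧
      x = (ε : ℝ) * ∑ i ∈ Finset.range n, (c i : ℝ) * theta a ^ i := by
  constructor
  · rintro ⟨ε, M, b, hε, hM, ⟨-, hb1, hb2⟩, rfl⟩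
    lift M to ℕ using hM
    refine ⟨ε, M + 1, fun i => b i, hε, ⟨fun i => hb1 i, fun i hi => ?_⟩, ?_⟩
    · simpa using hb2 _ hi
    · rw [sum_Icc_int]
      simp
  · rintro ⟨ε, n, c, hε, ⟨hc1, hc2⟩, rfl⟩
    refine ⟨ε, n, fun i => if 0 ≤ i ∧ i < n then c i.toNat else 0, hε, by positivity,
      ⟨?_, ?_, ?_⟩, ?_⟩
    · intro i hi
      have : 0 ≤ i ∧ i < n := by
        by_contra h
        simp [h] at hi
      omega
    · intro i
      dsimp only
      split_ifs
      · exact hc1 _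
      · simp
    · intro i hi
      dsimp only at hi ⊢
      split_ifs at hi with h
      · split_ifs with h'
        · have e : i.toNat = (i - 1).toNat + 1 := by omega
          rw [e] at hi
          exact hc2 _ hi
        · rfl
      · omega
    · rw [sum_Icc_int, Finset.sum_range_succ]
      simp only [lt_irrefl, and_false, if_false, Int.cast_zero, zero_mul, add_zero]
      congr 1
      refine Finset.sum_congr rfl fun i hi => ?_
      simp at hi
      simp [hi]

/-- Conjugates of nonnegative `θ`-integers lie in `(-1, θ)`. -/
lemma conjSum_bounds {a : ℕ} (ha : 1 ≤ a) (n : ℕ) : ∀ c : ℕ → ℤ, Adm a c →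
    -1 < ∑ i ∈ Finset.range n, (c i : ℝ) * thetaConj a ^ i ∧
      ∑ i ∈ Finset.range n, (c i : ℝ) * thetaConj a ^ i < theta a := by
  have h1 := theta_pos a
  have hi := theta_inv a
  have hip := inv_pos.mpr h1
  induction n with
  | zero => intro c _; simp [h1]
  | succ n ih =>
    intro c hc
    obtain ⟨l, u⟩ := ih _ hc.shift
    have e : ∑ i ∈ Finset.range (n + 1), (c i : ℝ) * thetaConj a ^ i
        = c 0 - (theta a)⁻¹ * ∑ i ∈ Finset.range n, (c (i + 1) : ℝ) * thetaConj a ^ i := by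
      rw [Finset.sum_range_succ', Finset.mul_sum, pow_zero, mul_one, add_comm, sub_eq_add_neg,
        ← Finset.sum_neg_distrib]
      congr 1
      refine Finset.sum_congr rfl fun i _ => ?_
      rw [pow_succ, thetaConj]
      ring
    rw [e]
    have h0 : (0 : ℝ) ≤ c 0 := by exact_mod_cast (hc.1 0).1
    have h0' : (c 0 : ℝ) ≤ a := by exact_mod_cast (hc.1 0).2
    have m1 := mul_lt_mul_of_pos_left l hip
    have m2 := mul_lt_mul_of_pos_left u hip
    rw [inv_mul_cancel₀ h1.ne'] at m2
    constructor <;> linarith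

/-- If the lowest digit is nonzero, the next one is at most `a - 1`, which improves the lower
bound of `conjSum_bounds` to `1/θ`. -/
lemma conjSum_lower {a : ℕ} (ha : 1 ≤ a) (n : ℕ) (c : ℕ → ℤ) (hc : Adm a c) (h0 : c 0 ≠ 0) :
    (theta a)⁻¹ < ∑ i ∈ Finset.range (n + 1), (c i : ℝ) * thetaConj a ^ i := by
  have h1 := theta_pos a
  have h1' := one_lt_theta ha
  have hi := theta_inv a
  have hip := inv_pos.mpr h1
  have c0 : (1 : ℝ) ≤ c 0 := by
    have := (hc.1 0).1
    exact_mod_cast (by omega : 1 ≤ c 0)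
  rw [Finset.sum_range_succ']
  simp only [pow_zero, mul_one]
  cases n with
  | zero => simp; linarith [inv_lt_one_of_one_lt₀ h1']
  | succ n =>
    rw [Finset.sum_range_succ']
    have c1 : (c 1 : ℝ) ≤ a - 1 := by
      have h2 := (hc.1 1).2
      have h3 : c 1 ≠ a := fun h => h0 (hc.2 0 h)
      have : c 1 ≤ (a : ℤ) - 1 := by omega
      exact_mod_cast this
    obtain ⟨l, -⟩ := conjSum_bounds ha n _ hc.shift.shift
    have e : ∑ i ∈ Finset.range n, (c (i + 1 + 1) : ℝ) * thetaConj a ^ (i + 1 + 1)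
        = (theta a)⁻¹ * ((theta a)⁻¹ *
          ∑ i ∈ Finset.range n, (c (i + 1 + 1) : ℝ) * thetaConj a ^ i) := by
      rw [Finset.mul_sum, Finset.mul_sum]
      refine Finset.sum_congr rfl fun i _ => ?_
      rw [pow_succ, pow_succ, thetaConj]
      ring
    rw [e]
    have m1 := mul_lt_mul_of_pos_left l hip
    have m2 := mul_lt_mul_of_pos_left m1 hip
    have m3 := mul_le_mul_of_nonneg_left c1 hip.le
    have e2 : (theta a)⁻¹ * (theta a - 1 - (theta a)⁻¹) = (theta a)⁻¹ * (a - 1) := by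
      rw [hi]; ring
    have e3 : (theta a)⁻¹ * theta a = 1 := inv_mul_cancel₀ h1.ne'
    have e4 : (c (0 + 1) : ℝ) * thetaConj a ^ (0 + 1) = - ((theta a)⁻¹ * c 1) := by
      simp [thetaConj]; ring
    rw [e4]
    nlinarith

/-! ### Finiteness of expansions -/

/-- The remainders of the greedy expansion of `x ∈ [0, 1)`. -/
def rem (a : ℕ) (x : ℝ) : ℕ → ℝ
  | 0 => x
  | n + 1 => Int.fract (theta a * rem a x n)

/-- The digits of the greedy expansion of `x ∈ [0, 1)`; `dig a x n` belongs to `θ^{-n-1}`. -/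
def dig (a : ℕ) (x : ℝ) (n : ℕ) : ℤ := ⌊theta a * rem a x n⌋

lemma rem_succ (a : ℕ) (x : ℝ) (n : ℕ) :
    rem a x (n + 1) = theta a * rem a x n - dig a x n := rfl

lemma rem_mem (a : ℕ) {x : ℝ} (h0 : 0 ≤ x) (h1 : x < 1) (n : ℕ) :
    0 ≤ rem a x n ∧ rem a x n < 1 := by
  cases n with
  | zero => exact ⟨h0, h1⟩
  | succ n => exact ⟨Int.fract_nonneg _, Int.fract_lt_one _⟩

lemma dig_mem {a : ℕ} (ha : 1 ≤ a) {x : ℝ} (h0 : 0 ≤ x) (h1 : x < 1) (n : ℕ) :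
    0 ≤ dig a x n ∧ dig a x n ≤ a := by
  obtain ⟨r0, r1⟩ := rem_mem a h0 h1 n
  have ht := theta_pos a
  refine ⟨Int.floor_nonneg.mpr (by positivity), ?_⟩
  have : dig a x n < (a : ℤ) + 1 := by
    rw [dig, Int.floor_lt]
    push_cast
    nlinarith [theta_lt ha]
  omega

lemma dig_succ_eq_zero {a : ℕ} (ha : 1 ≤ a) {x : ℝ} (h0 : 0 ≤ x) (h1 : x < 1) (n : ℕ)
    (h : dig a x n = a) : dig a x (n + 1) = 0 := by
  obtain ⟨r0, r1⟩ := rem_mem a h0 h1 n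
  obtain ⟨s0, -⟩ := rem_mem a h0 h1 (n + 1)
  have ht := theta_pos a
  rw [dig, Int.floor_eq_zero_iff]
  refine ⟨by positivity, ?_⟩
  have : rem a x (n + 1) < (theta a)⁻¹ := by
    rw [rem_succ, h, theta_inv]
    push_cast
    nlinarith
  calc theta a * rem a x (n + 1) < theta a * (theta a)⁻¹ := by gcongr
    _ = 1 := mul_inv_cancel₀ ht.ne'

lemma rem_expansion (a : ℕ) (x : ℝ) (n : ℕ) :
    theta a ^ n * x = ∑ i ∈ Finset.range n, (dig a x (n - 1 - i) : ℝ) * theta a ^ i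
      + rem a x n := by
  induction n with
  | zero => simp [rem]
  | succ n ih =>
    rw [Finset.sum_range_succ', rem_succ, pow_succ', mul_assoc, ih, mul_add, Finset.mul_sum]
    have : ∑ i ∈ Finset.range n, theta a * ((dig a x (n - 1 - i) : ℝ) * theta a ^ i)
        = ∑ i ∈ Finset.range n, (dig a x (n + 1 - 1 - (i + 1)) : ℝ) * theta a ^ (i + 1) := by
      refine Finset.sum_congr rfl fun i _ => ?_
      rw [show n + 1 - 1 - (i + 1) = n - 1 - i by omega, pow_succ]
      ring
    rw [this]
    simp

lemma mem_Ztheta_of_rem {a : ℕ} (ha : 1 ≤ a) {x : ℝ} (h0 : 0 ≤ x) (h1 : x < 1) (n : ℕ)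
    (h : rem a x n = 0) : theta a ^ n * x ∈ Ztheta a := by
  rw [mem_Ztheta_iff ha]
  refine ⟨1, n, fun i => if i < n then dig a x (n - 1 - i) else 0, Or.inl rfl, ⟨?_, ?_⟩, ?_⟩
  · intro i
    dsimp only
    split_ifs
    · exact dig_mem ha h0 h1 _
    · simp
  · intro i hi
    dsimp only at hi ⊢
    split_ifs at hi with h'
    · rw [if_pos (by omega), show n - 1 - i = n - 1 - (i + 1) + 1 by omega]
      exact dig_succ_eq_zero ha h0 h1 _ hi
    · omega
  · rw [rem_expansion, h, Int.cast_one, one_mul, add_zero]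
    refine Finset.sum_congr rfl fun i hi => ?_
    simp only [Finset.mem_range] at hi
    simp [hi]

/-- The conjugates of the remainders approach `[-θ, 1]` exponentially fast. -/
lemma rem_conj {a : ℕ} (ha : 1 ≤ a) {x y : ℝ} (h0 : 0 ≤ x) (h1 : x < 1) (h : IsConj' a x y)
    (n : ℕ) : ∃ s, IsConj' a (rem a x n) s ∧
      -theta a - |y| * (theta a)⁻¹ ^ n ≤ s ∧ s ≤ 1 + |y| * (theta a)⁻¹ ^ n := by
  have ht := theta_pos a
  have hi := theta_inv a
  have hip := inv_pos.mpr ht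
  induction n with
  | zero =>
    refine ⟨y, h, ?_, ?_⟩
    · simp; linarith [neg_abs_le y]
    · simp; linarith [le_abs_self y]
  | succ n ih =>
    obtain ⟨s, hs, l, u⟩ := ih
    obtain ⟨d0, d1⟩ := dig_mem ha h0 h1 n
    have d0' : (0 : ℝ) ≤ dig a x n := by exact_mod_cast d0
    have d1' : (dig a x n : ℝ) ≤ a := by exact_mod_cast d1
    refine ⟨thetaConj a * s + ((-dig a x n : ℤ) : ℝ), ?_, ?_, ?_⟩
    · rw [rem_succ, sub_eq_add_neg, ← Int.cast_neg]
      exact ((IsConj'.theta_self a).mul hs).add (IsConj'.intCast _)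
    · have := mul_le_mul_of_nonneg_left u hip.le
      rw [thetaConj, pow_succ]
      push_cast
      linarith
    · have := mul_le_mul_of_nonneg_left l hip.le
      have e3 : (theta a)⁻¹ * theta a = 1 := inv_mul_cancel₀ ht.ne'
      rw [thetaConj, pow_succ]
      push_cast
      linarith

lemma exists_rem_eq_zero {a : ℕ} (ha : 1 ≤ a) {x y : ℝ} (h0 : 0 ≤ x) (h1 : x < 1)
    (h : IsConj' a x y) : ∃ n, rem a x n = 0 := by
  have ht := theta_pos a
  have ht1 := one_lt_theta ha
  have hi := theta_inv a
  have hip := inv_pos.mpr ht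
  have hi1 := inv_lt_one_of_one_lt₀ ht1
  obtain ⟨n, hn⟩ : ∃ n : ℕ, |y| * (theta a)⁻¹ ^ n < (theta a)⁻¹ := by
    have := (tendsto_pow_atTop_nhds_zero_of_lt_one hip.le hi1).const_mul |y|
    rw [mul_zero] at this
    exact (this.eventually_lt_const hip).exists
  obtain ⟨s, ⟨p, q, hr, hs⟩, l, u⟩ := rem_conj ha h0 h1 h n
  obtain ⟨r0, r1⟩ := rem_mem a h0 h1 n
  have hd : rem a x n - s = q * (theta a + (theta a)⁻¹) := by
    rw [hr, hs, thetaConj]; ring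
  have hw : 0 < theta a + (theta a)⁻¹ := by linarith
  have q0 : 0 ≤ q := by
    by_contra hq
    have : (q : ℝ) ≤ -1 := by exact_mod_cast (by omega : q ≤ -1)
    nlinarith
  have q1 : q ≤ 1 := by
    by_contra hq
    have : (2 : ℝ) ≤ q := by exact_mod_cast (by omega : 2 ≤ q)
    nlinarith
  obtain rfl | rfl : q = 0 ∨ q = 1 := by omega
  · refine ⟨n, ?_⟩
    simp only [Int.cast_zero, zero_mul, add_zero] at hr
    rw [hr] at r0 r1 ⊢
    have e0 : 0 ≤ p := by exact_mod_cast r0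
    have e1 : p < 1 := by exact_mod_cast r1
    exact_mod_cast (by omega : p = 0)
  · -- here the remainder is `θ - a = 1/θ`, so the next one vanishes
    refine ⟨n + 1, ?_⟩
    have hta := theta_lt ha
    have hat := a_lt_theta a
    simp only [Int.cast_one, one_mul] at hr
    have e0 : -(a : ℤ) - 1 < p := by
      have : -(a : ℝ) - 1 < p := by linarith
      exact_mod_cast this
    have e1 : p < 1 - (a : ℤ) := by
      have : (p : ℝ) < 1 - a := by linarith
      exact_mod_cast this
    have hp : p = -(a : ℤ) := by omega
    have : rem a x n = (theta a)⁻¹ := by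
      rw [hr, hp, hi]; push_cast; ring
    rw [rem, this, mul_inv_cancel₀ ht.ne']
    simp

lemma neg_mem_Ztheta {a : ℕ} {x : ℝ} (h : x ∈ Ztheta a) : -x ∈ Ztheta a := by
  obtain ⟨ε, M, b, hε, hM, hb, rfl⟩ := h
  refine ⟨-ε, M, b, by omega, hM, hb, by push_cast; ring⟩

lemma exists_mem_Ztheta_of_nonneg {a : ℕ} (ha : 1 ≤ a) {x y : ℝ} (h : IsConj' a x y)
    (h0 : 0 ≤ x) : ∃ k : ℤ, x / theta a ^ k ∈ Ztheta a := by
  have ht := theta_pos a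
  obtain ⟨N, hN⟩ := pow_unbounded_of_one_lt x (one_lt_theta ha)
  have hc := h.mul (IsConj'.theta_zpow a (-(N : ℤ)))
  have p0 : 0 ≤ x * theta a ^ (-(N : ℤ)) := by positivity
  have p1 : x * theta a ^ (-(N : ℤ)) < 1 := by
    rw [zpow_neg, zpow_natCast, ← div_eq_mul_inv, div_lt_one (by positivity)]
    exact hN
  obtain ⟨n, hn⟩ := exists_rem_eq_zero ha p0 p1 hc
  refine ⟨N - n, ?_⟩
  have := mem_Ztheta_of_rem ha p0 p1 n hn
  convert this using 1
  rw [zpow_sub₀ ht.ne', zpow_neg]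
  simp only [zpow_natCast]
  field_simp

/-- Every element of `ℤ[θ]` has a finite `θ`-expansion. -/
lemma exists_mem_Ztheta {a : ℕ} (ha : 1 ≤ a) {x y : ℝ} (h : IsConj' a x y) :
    ∃ k : ℤ, x / theta a ^ k ∈ Ztheta a := by
  rcases le_total 0 x with h0 | h0
  · exact exists_mem_Ztheta_of_nonneg ha h h0
  · have h' := h.mul (IsConj'.intCast (-1))
    obtain ⟨k, hk⟩ := exists_mem_Ztheta_of_nonneg ha h' (by push_cast; linarith)
    refine ⟨k, ?_⟩
    have := neg_mem_Ztheta hk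
    convert this using 1
    push_cast
    ring

/-! ### Infranorm versus conjugate -/

lemma abs_conj_eq {a : ℕ} (ha : 1 ≤ a) {x y : ℝ} (h : IsConj' a x y) {k ε : ℤ} {n : ℕ}
    {c : ℕ → ℤ} (hε : ε = 1 ∨ ε = -1)
    (hx : x / theta a ^ k = (ε : ℝ) * ∑ i ∈ Finset.range n, (c i : ℝ) * theta a ^ i) :
    |y| = theta a ^ (-k) * |∑ i ∈ Finset.range n, (c i : ℝ) * thetaConj a ^ i| := by
  have hk : theta a ^ k ≠ 0 := (zpow_pos (theta_pos a) k).ne'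
  have hS : IsConj' a (∑ i ∈ Finset.range n, (c i : ℝ) * theta a ^ i)
      (∑ i ∈ Finset.range n, (c i : ℝ) * thetaConj a ^ i) :=
    IsConj'.sum _ _ _ fun i _ => (IsConj'.intCast _).mul ((IsConj'.theta_self a).pow i)
  have h2 := (IsConj'.theta_zpow a k).mul ((IsConj'.intCast ε).mul hS)
  rw [← hx, mul_div_cancel₀ _ hk] at h2
  rw [h.unique ha h2, abs_mul, abs_mul, abs_thetaConj_zpow]
  rcases hε with rfl | rfl <;> simp

/-- `v(x)` is attained with a nonzero lowest digit, so `|x'|` is within a factor `θ` of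
`θ^{-v(x)}`. -/
lemma conj_bounds {a : ℕ} (ha : 1 ≤ a) {x y : ℝ} (h : IsConj' a x y) (hx : x ≠ 0) :
    theta a ^ (-vval a x - 1) < |y| ∧ |y| < theta a ^ (-vval a x + 1) := by
  have ht := theta_pos a
  have ht1 := one_lt_theta ha
  have hy := abs_pos.mpr (h.ne_zero ha hx)
  have hup : ∀ k : ℤ, x / theta a ^ k ∈ Ztheta a → |y| < theta a ^ (-k + 1) := by
    intro k hk
    obtain ⟨ε, n, c, hε, hc, e⟩ := (mem_Ztheta_iff ha _).mp hk
    rw [abs_conj_eq ha h hε e, zpow_add_one₀ ht.ne']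
    obtain ⟨l, u⟩ := conjSum_bounds ha n c hc
    have : |∑ i ∈ Finset.range n, (c i : ℝ) * thetaConj a ^ i| < theta a :=
      abs_lt.mpr ⟨by linarith, u⟩
    have := zpow_pos ht (-k)
    gcongr
  have hbdd : BddAbove {k : ℤ | x / theta a ^ k ∈ Ztheta a} := by
    obtain ⟨N, hN⟩ := pow_unbounded_of_one_lt |y|⁻¹ ht1
    refine ⟨N + 1, fun k hk => ?_⟩
    have h1 := hup k hk
    have h2 : theta a ^ (-(N : ℤ)) < |y| := by
      rw [zpow_neg, zpow_natCast]
      exact inv_lt_of_inv_lt₀ hy hN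
    have := (zpow_lt_zpow_iff_right₀ ht1).mp (h2.trans h1)
    omega
  have hmem : x / theta a ^ vval a x ∈ Ztheta a := Int.csSup_mem (exists_mem_Ztheta ha h) hbdd
  refine ⟨?_, hup _ hmem⟩
  obtain ⟨ε, n, c, hε, hc, e⟩ := (mem_Ztheta_iff ha _).mp hmem
  have hv := zpow_pos ht (vval a x)
  have hn : n ≠ 0 := by
    rintro rfl
    simp [hx, hv.ne'] at e
  obtain ⟨n, rfl⟩ := Nat.exists_eq_succ_of_ne_zero hn
  have hc0 : c 0 ≠ 0 := by
    -- otherwise the expansion can be shifted, contradicting maximality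
    intro h0
    have : x / theta a ^ (vval a x + 1) ∈ Ztheta a := by
      refine (mem_Ztheta_iff ha _).mpr ⟨ε, n, _, hε, hc.shift, ?_⟩
      rw [zpow_add_one₀ ht.ne', ← div_div, e, Finset.sum_range_succ', h0]
      simp only [Int.cast_zero, zero_mul, add_zero]
      rw [mul_div_assoc, Finset.sum_div]
      congr 1
      refine Finset.sum_congr rfl fun i _ => ?_
      rw [pow_succ]
      field_simp
    have h2 : vval a x + 1 ≤ vval a x := le_csSup hbdd this
    omega
  rw [abs_conj_eq ha h hε e, sub_eq_add_neg, zpow_add₀ ht.ne', zpow_neg_one]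
  have h3 := (conjSum_lower ha n c hc hc0).trans_le (le_abs_self _)
  have := zpow_pos ht (-vval a x)
  gcongr

/-- Inframultiplicativity, norm `−1` case. For every `k ≥ 2` and all nonzero
`x₁, …, x_k ∈ ℤ[θ]`, `θ^{−k}·|x₁|_θ⋯|x_k|_θ ≤ |x₁⋯x_k|_θ ≤ θ^{k}·|x₁|_θ⋯|x_k|_θ`. -/
theorem inframultiplicative_neg_one (a : ℕ) (ha : 1 ≤ a) (k : ℕ) (hk : 2 ≤ k)
    (x : Fin k → ℝ) (hx : ∀ i, inOK a (x i)) (hne : ∀ i, x i ≠ 0) :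
    theta a ^ (-(k : ℤ)) * ∏ i, thNorm a (x i) ≤ thNorm a (∏ i, x i) ∧
    thNorm a (∏ i, x i) ≤ theta a ^ (k : ℤ) * ∏ i, thNorm a (x i) := by
  have ht := theta_pos a
  have ht1 := one_lt_theta ha
  have hc : ∀ i, ∃ y, IsConj' a (x i) y := fun i => by
    obtain ⟨p, q, h⟩ := hx i
    exact ⟨_, p, q, h, rfl⟩
  choose y hy using hc
  have hP : ∏ i, x i ≠ 0 := Finset.prod_ne_zero_iff.mpr fun i _ => hne i
  obtain ⟨l, u⟩ := conj_bounds ha (IsConj'.prod Finset.univ x y fun i _ => hy i) hP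
  have zprod : ∀ f : Fin k → ℤ, ∏ i, theta a ^ f i = theta a ^ ∑ i, f i := fun f => by
    induction (Finset.univ : Finset (Fin k)) using Finset.induction_on with
    | empty => simp
    | insert i s hi ih => rw [Finset.prod_insert hi, Finset.sum_insert hi, ih, zpow_add₀ ht.ne']
  have U : |∏ i, y i| ≤ theta a ^ (-∑ i, vval a (x i) + k) := by
    rw [Finset.abs_prod]
    calc ∏ i, |y i| ≤ ∏ i, theta a ^ (-vval a (x i) + 1) :=
          Finset.prod_le_prod (fun i _ => abs_nonneg _)
            fun i _ => (conj_bounds ha (hy i) (hne i)).2.le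
      _ = _ := by rw [zprod]; simp [Finset.sum_add_distrib]
  have L : theta a ^ (-∑ i, vval a (x i) - k) ≤ |∏ i, y i| := by
    rw [Finset.abs_prod]
    calc _ = ∏ i, theta a ^ (-vval a (x i) - 1) := by rw [zprod]; simp [Finset.sum_sub_distrib]
      _ ≤ ∏ i, |y i| :=
          Finset.prod_le_prod (fun i _ => (zpow_pos ht _).le)
            fun i _ => (conj_bounds ha (hy i) (hne i)).1.le
  have e1 := (zpow_lt_zpow_iff_right₀ ht1).mp (l.trans_le U)
  have e2 := (zpow_lt_zpow_iff_right₀ ht1).mp (L.trans_lt u)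
  have hN : ∏ i, thNorm a (x i) = theta a ^ (-∑ i, vval a (x i)) := by
    simp only [thNorm, hne, if_false]
    rw [zprod, Finset.sum_neg_distrib]
  rw [hN, thNorm, if_neg hP, ← zpow_add₀ ht.ne', ← zpow_add₀ ht.ne']
  exact ⟨zpow_le_zpow_right₀ ht1.le (by omega), zpow_le_zpow_right₀ ht1.le (by omega)⟩
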